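/- arXiv:math/0602181 — 4 statements merged into one kernel-verified Lean document; each statement's English description precedes it below -/
import Mathlib

section
/- Assume λ ∈ ℂ \ ℤ, χ_p ≠ 0, and, in case p = 0, additionally χ_0 ∈ ℂ \ ℤ. Then F(λ/z, χ) is irreducible: the only ℂ-subspaces of F invariant under all the operators G⁺(i−1/2) and G⁻(i−1/2), i ∈ ℤ, are {0} and F. -/
noncomputable section

/-- The fermionic Fock space `F`: it has basis indexed by pairs `(A, B)` of finite sets of
nonnegative integers, the pair `(A, B)` corresponding to the basis monomial
`Ψ⁺(−n₁−1/2)⋯Ψ⁺(−n_r−1/2)·Ψ⁻(−k₁−1/2)⋯Ψ⁻(−k_s−1/2)·𝟙` where `A = {n₁ > ⋯ > n_r}` and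
`B = {k₁ > ⋯ > k_s}`. -/
abbrev FockF : Type := (Finset ℕ × Finset ℕ) →₀ ℂ

/-- The vacuum vector `𝟙`. -/
def vac : FockF := Finsupp.single (∅, ∅) 1

/-- `(−1)^{#{a ∈ S : a > m}}`. -/
def sgn (S : Finset ℕ) (m : ℕ) : ℂ := (-1 : ℂ) ^ (S.filter fun a => m < a).card

/-- `Ψ⁺(−m−1/2)`: exterior multiplication (creation). -/
def psiPneg (m : ℕ) : Module.End ℂ FockF :=
  Finsupp.lsum ℂ fun AB : Finset ℕ × Finset ℕ => LinearMap.toSpanSingleton ℂ FockF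
    (if m ∈ AB.1 then 0 else sgn AB.1 m • Finsupp.single (insert m AB.1, AB.2) 1)

/-- `Ψ⁺(m+1/2)`: the odd contraction operator pairing with `Ψ⁻(−m−1/2)` (annihilation). -/
def psiPpos (m : ℕ) : Module.End ℂ FockF :=
  Finsupp.lsum ℂ fun AB : Finset ℕ × Finset ℕ => LinearMap.toSpanSingleton ℂ FockF
    (if m ∈ AB.2 then ((-1 : ℂ) ^ AB.1.card * sgn AB.2 m) • Finsupp.single (AB.1, AB.2.erase m) 1
     else 0)

/-- `Ψ⁻(−m−1/2)`: exterior multiplication (creation). -/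
def psiMneg (m : ℕ) : Module.End ℂ FockF :=
  Finsupp.lsum ℂ fun AB : Finset ℕ × Finset ℕ => LinearMap.toSpanSingleton ℂ FockF
    (if m ∈ AB.2 then 0
     else ((-1 : ℂ) ^ AB.1.card * sgn AB.2 m) • Finsupp.single (AB.1, insert m AB.2) 1)

/-- `Ψ⁻(m+1/2)`: the odd contraction operator pairing with `Ψ⁺(−m−1/2)` (annihilation). -/
def psiMpos (m : ℕ) : Module.End ℂ FockF :=
  Finsupp.lsum ℂ fun AB : Finset ℕ × Finset ℕ => LinearMap.toSpanSingleton ℂ FockF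
    (if m ∈ AB.1 then sgn AB.1 m • Finsupp.single (AB.1.erase m, AB.2) 1 else 0)

/-- `PsiP i` is the operator `Ψ⁺(i − 1/2)`, `i ∈ ℤ`. -/
def PsiP (i : ℤ) : Module.End ℂ FockF :=
  if i ≤ 0 then psiPneg (-i).toNat else psiPpos (i - 1).toNat

/-- `PsiM i` is the operator `Ψ⁻(i − 1/2)`, `i ∈ ℤ`. -/
def PsiM (i : ℤ) : Module.End ℂ FockF :=
  if i ≤ 0 then psiMneg (-i).toNat else psiMpos (i - 1).toNat

/-- `G⁺(i−1/2) = (λ − i)·Ψ⁺(i−1/2)`. -/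
def Gplus (lam : ℂ) (i : ℤ) : Module.End ℂ FockF := (lam - (i : ℂ)) • PsiP i

/-- The finite set of indices `k ≥ −p` for which `Ψ⁻(k+i−1/2)` can act nontrivially on the
basis monomial `AB`; outside of it all terms of the locally finite sum defining `G⁻` vanish. -/
def GminusIdx (p : ℕ) (i : ℤ) (AB : Finset ℕ × Finset ℕ) : Finset ℤ :=
  (Finset.Icc (-(p : ℤ)) (-i) ∪ AB.1.image fun a : ℕ => (a : ℤ) + 1 - i).filter
    fun k => -(p : ℤ) ≤ k

/-- `G⁻(i−1/2) = −i·Ψ⁻(i−1/2) + Σ_{k=−p}^∞ χ_{−k}·Ψ⁻(k+i−1/2)` (a locally finite sum). -/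
def Gminus (p : ℕ) (χ : ℤ → ℂ) (i : ℤ) : Module.End ℂ FockF :=
  (-(i : ℂ)) • PsiM i +
    Finsupp.lsum ℂ fun AB : Finset ℕ × Finset ℕ => LinearMap.toSpanSingleton ℂ FockF
      (∑ k ∈ GminusIdx p i AB, χ (-k) • PsiM (k + i) (Finsupp.single AB 1))

end

lemma psiPneg_single (m : ℕ) (AB : Finset ℕ × Finset ℕ) (c : ℂ) :
    psiPneg m (Finsupp.single AB c) = c • (if m ∈ AB.1 then (0 : FockF) else
      sgn AB.1 m • Finsupp.single (insert m AB.1, AB.2) 1) := by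
  unfold psiPneg
  rw [Finsupp.lsum_single, LinearMap.toSpanSingleton_apply]

lemma psiPpos_single (m : ℕ) (AB : Finset ℕ × Finset ℕ) (c : ℂ) :
    psiPpos m (Finsupp.single AB c) = c • (if m ∈ AB.2 then
      ((-1 : ℂ) ^ AB.1.card * sgn AB.2 m) • Finsupp.single (AB.1, AB.2.erase m) 1
      else (0 : FockF)) := by
  unfold psiPpos
  rw [Finsupp.lsum_single, LinearMap.toSpanSingleton_apply]

lemma psiMneg_single (m : ℕ) (AB : Finset ℕ × Finset ℕ) (c : ℂ) :
    psiMneg m (Finsupp.single AB c) = c • (if m ∈ AB.2 then (0 : FockF) else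
      ((-1 : ℂ) ^ AB.1.card * sgn AB.2 m) • Finsupp.single (AB.1, insert m AB.2) 1) := by
  unfold psiMneg
  rw [Finsupp.lsum_single, LinearMap.toSpanSingleton_apply]

lemma psiMpos_single (m : ℕ) (AB : Finset ℕ × Finset ℕ) (c : ℂ) :
    psiMpos m (Finsupp.single AB c) = c • (if m ∈ AB.1 then
      sgn AB.1 m • Finsupp.single (AB.1.erase m, AB.2) 1 else (0 : FockF)) := by
  unfold psiMpos
  rw [Finsupp.lsum_single, LinearMap.toSpanSingleton_apply]

lemma sgn_ne_zero (S : Finset ℕ) (m : ℕ) : sgn S m ≠ 0 := by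
  unfold sgn
  exact pow_ne_zero _ (by norm_num)

lemma sgn_mul_self (S : Finset ℕ) (m : ℕ) : sgn S m * sgn S m = 1 := by
  unfold sgn
  rw [← mul_pow]
  norm_num

lemma sgn_erase (S : Finset ℕ) (m : ℕ) : sgn (S.erase m) m = sgn S m := by
  unfold sgn
  congr 2
  ext a
  simp only [Finset.mem_filter, Finset.mem_erase]
  constructor
  · rintro ⟨⟨_, h⟩, h'⟩
    exact ⟨h, h'⟩
  · rintro ⟨h, h'⟩
    exact ⟨⟨by omega, h⟩, h'⟩

lemma number_A (m : ℕ) (v : FockF) :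
    psiPneg m (psiMpos m v) = v.filter (fun AB => m ∈ AB.1) := by
  induction v using Finsupp.induction_linear with
  | zero => rw [map_zero, map_zero, Finsupp.filter_zero]
  | add f g hf hg => rw [map_add, map_add, hf, hg, Finsupp.filter_add]
  | single AB c =>
    rw [psiMpos_single]
    by_cases h : m ∈ AB.1
    · rw [if_pos h, Finsupp.filter_single_of_pos (p := fun AB : Finset ℕ × Finset ℕ => m ∈ AB.1) h, map_smul, map_smul, psiPneg_single]
      simp only [Finset.notMem_erase, if_false, sgn_erase, Finset.insert_erase h, one_smul]
      rw [smul_smul (sgn AB.1 m), sgn_mul_self]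
      simp
    · rw [if_neg h, Finsupp.filter_single_of_neg (p := fun AB : Finset ℕ × Finset ℕ => m ∈ AB.1) h]
      simp

lemma number_B (m : ℕ) (v : FockF) :
    psiMneg m (psiPpos m v) = v.filter (fun AB => m ∈ AB.2) := by
  induction v using Finsupp.induction_linear with
  | zero => rw [map_zero, map_zero, Finsupp.filter_zero]
  | add f g hf hg => rw [map_add, map_add, hf, hg, Finsupp.filter_add]
  | single AB c =>
    rw [psiPpos_single]
    by_cases h : m ∈ AB.2
    · rw [if_pos h, Finsupp.filter_single_of_pos (p := fun AB : Finset ℕ × Finset ℕ => m ∈ AB.2) h, map_smul, map_smul, psiMneg_single]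
      simp only [Finset.notMem_erase, if_false, sgn_erase, Finset.insert_erase h, one_smul]
      rw [smul_smul ((-1 : ℂ) ^ AB.1.card * sgn AB.2 m), mul_mul_mul_comm, sgn_mul_self,
        ← mul_pow]
      simp
    · rw [if_neg h, Finsupp.filter_single_of_neg (p := fun AB : Finset ℕ × Finset ℕ => m ∈ AB.2) h]
      simp

/-- An invariant subspace closed under a splitting filter contains smaller vectors. -/
lemma exists_single_mem (U : Submodule ℂ FockF)
    (hA : ∀ m : ℕ, ∀ v ∈ U, v.filter (fun AB => m ∈ AB.1) ∈ U)
    (hB : ∀ m : ℕ, ∀ v ∈ U, v.filter (fun AB => m ∈ AB.2) ∈ U) :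
    ∀ (n : ℕ) (v : FockF), v.support.card ≤ n → v ∈ U → v ≠ 0 →
      ∃ AB, (Finsupp.single AB 1 : FockF) ∈ U := by
  intro n
  induction n with
  | zero =>
    intro v hn _ h0
    exact absurd (Finsupp.support_eq_empty.1 (Finset.card_eq_zero.1 (Nat.le_zero.1 hn))) h0
  | succ n ih =>
    intro v hn hv h0
    obtain ⟨X, hX⟩ := Finsupp.support_nonempty_iff.2 h0
    by_cases hall : ∀ Y ∈ v.support, Y = X
    · have hvX : v = Finsupp.single X (v X) := by
        ext Y
        by_cases hY : Y = X
        · subst hY; simp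
        · rw [Finsupp.single_eq_of_ne hY]
          by_contra hne
          exact hY (hall Y (Finsupp.mem_support_iff.2 hne))
      refine ⟨X, ?_⟩
      have := U.smul_mem (v X)⁻¹ hv
      rw [hvX, Finsupp.smul_single] at this
      simpa [inv_mul_cancel₀ (Finsupp.mem_support_iff.1 hX)] using this
    · push Not at hall
      obtain ⟨Y, hY, hYX⟩ := hall
      -- a separating predicate
      have key : ∀ (q : Finset ℕ × Finset ℕ → Prop) [DecidablePred q], v.filter q ∈ U →
          ∀ P Q, P ∈ v.support → Q ∈ v.support → q P → ¬ q Q →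
          ∃ AB, (Finsupp.single AB 1 : FockF) ∈ U := by
        intro q _ hq P Q hP hQ hqP hqQ
        refine ih (v.filter q) ?_ hq ?_
        · have : (v.filter q).support ⊂ v.support := by
            rw [Finsupp.support_filter]
            exact Finset.filter_ssubset.2 ⟨Q, hQ, hqQ⟩
          have := Finset.card_lt_card this
          omega
        · intro h
          have h2 := DFunLike.congr_fun h P
          rw [Finsupp.filter_apply_pos _ _ hqP] at h2
          exact Finsupp.mem_support_iff.1 hP h2
      have hsep : (∃ m, ¬ (m ∈ X.1 ↔ m ∈ Y.1)) ∨ (∃ m, ¬ (m ∈ X.2 ↔ m ∈ Y.2)) := by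
        by_contra hc
        push Not at hc
        exact hYX (Prod.ext (Finset.ext fun m => (hc.1 m).symm) (Finset.ext fun m => (hc.2 m).symm))
      rcases hsep with ⟨m, hm⟩ | ⟨m, hm⟩
      · by_cases h1 : m ∈ X.1
        · exact key _ (hA m v hv) X Y hX hY h1 (fun h => hm ⟨fun _ => h, fun _ => h1⟩)
        · exact key _ (hA m v hv) Y X hY hX (by tauto) h1
      · by_cases h1 : m ∈ X.2
        · exact key _ (hB m v hv) X Y hX hY h1 (fun h => hm ⟨fun _ => h, fun _ => h1⟩)
        · exact key _ (hB m v hv) Y X hY hX (by tauto) h1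

lemma clifford_irred (U : Submodule ℂ FockF)
    (h1 : ∀ m, ∀ v ∈ U, psiPneg m v ∈ U) (h2 : ∀ m, ∀ v ∈ U, psiPpos m v ∈ U)
    (h3 : ∀ m, ∀ v ∈ U, psiMneg m v ∈ U) (h4 : ∀ m, ∀ v ∈ U, psiMpos m v ∈ U) :
    U = ⊥ ∨ U = ⊤ := by
  by_cases hbot : U = ⊥
  · exact Or.inl hbot
  right
  obtain ⟨v, hv, hv0⟩ := (Submodule.ne_bot_iff U).1 hbot
  obtain ⟨⟨A, B⟩, hAB⟩ := exists_single_mem U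
    (fun m v hv => by rw [← number_A]; exact h1 m _ (h4 m v hv))
    (fun m v hv => by rw [← number_B]; exact h3 m _ (h2 m v hv)) _ v le_rfl hv hv0
  have e0 : ∀ n : ℕ, (-1 : ℂ) ^ n ≠ 0 := fun n => pow_ne_zero _ (by norm_num)
  have insA : ∀ m A B, m ∉ A → (Finsupp.single (A, B) 1 : FockF) ∈ U →
      (Finsupp.single (insert m A, B) 1 : FockF) ∈ U := by
    intro m A B hm h
    have := h1 m _ h
    rw [psiPneg_single, one_smul, if_neg hm] at this
    exact (U.smul_mem_iff (sgn_ne_zero _ _)).1 this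
  have insB : ∀ m A B, m ∉ B → (Finsupp.single (A, B) 1 : FockF) ∈ U →
      (Finsupp.single (A, insert m B) 1 : FockF) ∈ U := by
    intro m A B hm h
    have := h3 m _ h
    rw [psiMneg_single, one_smul, if_neg hm] at this
    exact (U.smul_mem_iff (mul_ne_zero (e0 _) (sgn_ne_zero _ _))).1 this
  have delA : ∀ m A B, m ∉ A → (Finsupp.single (insert m A, B) 1 : FockF) ∈ U →
      (Finsupp.single (A, B) 1 : FockF) ∈ U := by
    intro m A B hm h
    have := h4 m _ h
    rw [psiMpos_single, one_smul, if_pos (Finset.mem_insert_self _ _)] at this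
    simpa only [Finset.erase_insert hm] using (U.smul_mem_iff (sgn_ne_zero _ _)).1 this
  have delB : ∀ m A B, m ∉ B → (Finsupp.single (A, insert m B) 1 : FockF) ∈ U →
      (Finsupp.single (A, B) 1 : FockF) ∈ U := by
    intro m A B hm h
    have := h2 m _ h
    rw [psiPpos_single, one_smul, if_pos (Finset.mem_insert_self _ _)] at this
    simpa only [Finset.erase_insert hm] using
      (U.smul_mem_iff (mul_ne_zero (e0 _) (sgn_ne_zero _ _))).1 this
  have dA : ∀ A B, (Finsupp.single (A, B) 1 : FockF) ∈ U →
      (Finsupp.single (∅, B) 1 : FockF) ∈ U := by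
    intro A B
    induction A using Finset.induction_on with
    | empty => exact id
    | insert m A hm ih => exact fun h => ih (delA m A B hm h)
  have dB : ∀ A B, (Finsupp.single (A, B) 1 : FockF) ∈ U →
      (Finsupp.single (A, ∅) 1 : FockF) ∈ U := by
    intro A B
    induction B using Finset.induction_on with
    | empty => exact id
    | insert m B hm ih => exact fun h => ih (delB m A B hm h)
  have hvac := dB _ _ (dA _ _ hAB)
  have cA : ∀ A, (Finsupp.single (A, ∅) 1 : FockF) ∈ U := by
    intro A
    induction A using Finset.induction_on with
    | empty => exact hvac
    | insert m A hm ih => exact insA m A _ hm ih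
  have cB : ∀ A B, (Finsupp.single (A, B) 1 : FockF) ∈ U := by
    intro A B
    induction B using Finset.induction_on with
    | empty => exact cA A
    | insert m B hm ih => exact insB m A B hm ih
  rw [eq_top_iff]
  intro w _
  induction w using Finsupp.induction_linear with
  | zero => exact U.zero_mem
  | add f g hf hg => exact U.add_mem (hf trivial) (hg trivial)
  | single X c =>
    have := U.smul_mem c (cB X.1 X.2)
    simpa using this

lemma PsiM_vanish (v : FockF) : ∃ N : ℤ, ∀ j, N ≤ j → PsiM j v = 0 := by
  induction v using Finsupp.induction_linear with
  | zero => exact ⟨0, fun j _ => map_zero _⟩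
  | add f g hf hg =>
    obtain ⟨a, ha⟩ := hf
    obtain ⟨b, hb⟩ := hg
    refine ⟨max a b, fun j hj => ?_⟩
    rw [map_add, ha j (by omega), hb j (by omega), add_zero]
  | single AB c =>
    refine ⟨(AB.1.sup id : ℕ) + 2, fun j hj => ?_⟩
    unfold PsiM
    rw [if_neg (by omega), psiMpos_single, if_neg, smul_zero]
    intro hm
    have := Finset.le_sup (f := id) hm
    simp only [id] at this
    omega

lemma Gminus_eq (p : ℕ) (χ : ℤ → ℂ) (i : ℤ) (v : FockF) :
    ∃ K0 : ℤ, ∀ K, K0 ≤ K → Gminus p χ i v = (-(i : ℂ)) • PsiM i v +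
      ∑ k ∈ Finset.Icc (-(p : ℤ)) K, χ (-k) • PsiM (k + i) v := by
  induction v using Finsupp.induction_linear with
  | zero => exact ⟨0, fun j _ => by simp⟩
  | add f g hf hg =>
    obtain ⟨a, ha⟩ := hf
    obtain ⟨b, hb⟩ := hg
    refine ⟨max a b, fun K hK => ?_⟩
    rw [map_add, ha K (by omega), hb K (by omega)]
    simp only [map_add, smul_add, Finset.sum_add_distrib]
    abel
  | single AB c =>
    refine ⟨max (-i) ((AB.1.sup id : ℕ) + 1 - i), fun K hK => ?_⟩
    unfold Gminus
    rw [LinearMap.add_apply, LinearMap.smul_apply, Finsupp.lsum_single,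
      LinearMap.toSpanSingleton_apply, Finset.smul_sum]
    congr 1
    have hterm : ∀ k, c • χ (-k) • PsiM (k + i) (Finsupp.single AB 1) =
        χ (-k) • PsiM (k + i) (Finsupp.single AB c) := by
      intro k
      rw [smul_comm, ← map_smul, Finsupp.smul_single, smul_eq_mul, mul_one]
    rw [Finset.sum_congr rfl (fun k _ => hterm k)]
    apply Finset.sum_subset
    · intro k hk
      unfold GminusIdx at hk
      simp only [Finset.mem_filter, Finset.mem_union, Finset.mem_Icc, Finset.mem_image] at hk
      obtain ⟨h | ⟨a, ha, rfl⟩, h'⟩ := hk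
      · exact Finset.mem_Icc.2 ⟨h', by omega⟩
      · have := Finset.le_sup (f := id) ha
        simp only [id] at this
        exact Finset.mem_Icc.2 ⟨h', by omega⟩
    · intro k hk hk'
      rw [Finset.mem_Icc] at hk
      unfold GminusIdx at hk'
      simp only [Finset.mem_filter, Finset.mem_union, Finset.mem_Icc, Finset.mem_image] at hk'
      have hki : ¬ (k + i ≤ 0) := fun h => hk' ⟨Or.inl ⟨hk.1, by omega⟩, hk.1⟩
      unfold PsiM
      rw [if_neg hki, psiMpos_single, if_neg, smul_zero, smul_zero]
      intro hm
      exact hk' ⟨Or.inr ⟨_, hm, by omega⟩, hk.1⟩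

/-- If `λ ∈ ℂ \ ℤ`, `χ_p ≠ 0` and (when `p = 0`) `χ_0 ∈ ℂ \ ℤ`, then the
module `F(λ/z, χ)` is irreducible: the only `ℂ`-subspaces of `F` invariant under all the
operators `G⁺(i−1/2)` and `G⁻(i−1/2)`, `i ∈ ℤ`, are `{0}` and `F`. -/
theorem statement0 (p : ℕ) (χ : ℤ → ℂ) (hχtop : ∀ j : ℤ, (p : ℤ) < j → χ j = 0)
    (hp : χ p ≠ 0) (h0 : p = 0 → ∀ n : ℤ, χ 0 ≠ (n : ℂ))
    (lam : ℂ) (hlam : ∀ n : ℤ, lam ≠ (n : ℂ))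
    (U : Submodule ℂ FockF)
    (hU : ∀ i : ℤ, ∀ v ∈ U, Gplus lam i v ∈ U ∧ Gminus p χ i v ∈ U) :
    U = ⊥ ∨ U = ⊤ := by
  have hP : ∀ i : ℤ, ∀ v ∈ U, PsiP i v ∈ U := by
    intro i v hv
    have := (hU i v hv).1
    unfold Gplus at this
    rw [LinearMap.smul_apply] at this
    exact (U.smul_mem_iff (sub_ne_zero.2 (hlam i))).1 this
  have hM : ∀ v ∈ U, ∀ j : ℤ, PsiM j v ∈ U := by
    intro v hv
    obtain ⟨N, hN⟩ := PsiM_vanish v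
    have main : ∀ n : ℕ, ∀ j : ℤ, N ≤ j + n → PsiM j v ∈ U := by
      intro n
      induction n with
      | zero =>
        intro j hj
        rw [hN j (by simpa using hj)]
        exact U.zero_mem
      | succ n ih =>
        intro j hj
        push_cast at hj
        obtain ⟨K0, hK0⟩ := Gminus_eq p χ (j + p) v
        have hG := (hU (j + p) v hv).2
        rw [hK0 (max K0 (-(p : ℤ))) (le_max_left _ _),
          ← Finset.add_sum_erase _ _ (Finset.left_mem_Icc.2 (le_max_right K0 (-(p : ℤ)))),
          ← add_assoc] at hG
        rw [U.add_mem_iff_left] at hG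
        · rw [neg_neg, show -(p : ℤ) + (j + p) = j by ring] at hG
          rcases Nat.eq_zero_or_pos p with h | h
          · subst h
            simp only [Nat.cast_zero, add_zero, ← add_smul] at hG
            refine (U.smul_mem_iff ?_).1 hG
            intro hc
            exact h0 rfl j (by linear_combination hc)
          · rw [U.add_mem_iff_right (U.smul_mem _ (ih _ (by omega)))] at hG
            exact (U.smul_mem_iff hp).1 hG
        · refine U.sum_mem fun k hk => U.smul_mem _ (ih _ ?_)
          rw [Finset.mem_erase, Finset.mem_Icc] at hk
          omega
    intro j
    exact main (N - j).toNat j (by omega)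
  apply clifford_irred
  · intro m v hv
    have := hP (-(m : ℤ)) v hv
    unfold PsiP at this
    rw [if_pos (by omega)] at this
    simpa using this
  · intro m v hv
    have := hP ((m : ℤ) + 1) v hv
    unfold PsiP at this
    rw [if_neg (by omega)] at this
    simpa using this
  · intro m v hv
    have := hM v hv (-(m : ℤ))
    unfold PsiM at this
    rw [if_pos (by omega)] at this
    simpa using this
  · intro m v hv
    have := hM v hv ((m : ℤ) + 1)
    unfold PsiM at this
    rw [if_neg (by omega)] at this
    simpa using this
end

section
/- For every N ∈ ℤ≥0 one has the identity G⁻(p−N−1/2)·G⁻(p−N+1/2)···G⁻(p−3/2)·G⁻(p−1/2)·𝟙 = C · Ψ⁻(−N−1/2)Ψ⁻(−N+1/2)···Ψ⁻(−3/2)Ψ⁻(−1/2)𝟙, where C = χ_p^{N+1} if p ≥ 1, and C = χ_0(χ_0+1)···(χ_0+N) if p = 0. -/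
/-- `iterGm p χ N = G⁻(p−N−1/2)·G⁻(p−N+1/2)⋯G⁻(p−3/2)·G⁻(p−1/2)·𝟙`. -/
noncomputable def iterGm (p : ℕ) (χ : ℤ → ℂ) : ℕ → FockF
  | 0 => Gminus p χ p vac
  | N + 1 => Gminus p χ ((p : ℤ) - (N + 1)) (iterGm p χ N)

theorem PsiM_zero_aux (M : ℕ) (j : ℤ) (h : -(M : ℤ) < j) :
    PsiM j (Finsupp.single (∅, Finset.range M) 1) = 0 := by
  unfold PsiM
  split_ifs with h0
  · have : (-j).toNat < M := by omega
    simp [psiMneg, this]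
  · simp [psiMpos]

theorem PsiM_top_aux (M : ℕ) :
    PsiM (-(M : ℤ)) (Finsupp.single (∅, Finset.range M) 1) =
      Finsupp.single (∅, Finset.range (M + 1)) 1 := by
  have hf : (Finset.range M).filter (fun a => M < a) = ∅ := by
    ext a
    simp only [Finset.mem_filter, Finset.mem_range, Finset.notMem_empty, iff_false]
    omega
  have h0 : -(M : ℤ) ≤ 0 := by omega
  rw [PsiM, if_pos h0, neg_neg, Int.toNat_natCast]
  simp only [psiMneg, Finsupp.lsum_single, LinearMap.toSpanSingleton_apply, one_smul,
    Finset.mem_range, lt_irrefl, if_false, sgn, hf, Finset.card_empty, pow_zero, mul_one,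
    Finset.range_add_one]

theorem Gminus_aux (p : ℕ) (χ : ℤ → ℂ) (M : ℕ) :
    Gminus p χ ((p : ℤ) - M) (Finsupp.single (∅, Finset.range M) 1) =
      (if p = 0 then χ 0 + (M : ℂ) else χ p) • Finsupp.single (∅, Finset.range (M + 1)) 1 := by
  have hsum : ∑ k ∈ GminusIdx p ((p : ℤ) - M) (∅, Finset.range M),
      χ (-k) • PsiM (k + ((p : ℤ) - M)) (Finsupp.single (∅, Finset.range M) 1) =
      χ p • Finsupp.single (∅, Finset.range (M + 1)) 1 := by
    rw [Finset.sum_eq_single (-(p : ℤ))]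
    · have : -(p : ℤ) + ((p : ℤ) - M) = -(M : ℤ) := by ring
      rw [this, PsiM_top_aux, neg_neg]
    · intro k hk hne
      have hk' : -(p : ℤ) ≤ k := (Finset.mem_filter.mp hk).2
      rw [PsiM_zero_aux M _ (by omega), smul_zero]
    · intro hk
      exfalso
      apply hk
      simp [GminusIdx]
  have hG : Gminus p χ ((p : ℤ) - M) (Finsupp.single (∅, Finset.range M) 1) =
      (-(((p : ℤ) - M : ℤ) : ℂ)) • PsiM ((p : ℤ) - M) (Finsupp.single (∅, Finset.range M) 1) +
      χ p • Finsupp.single (∅, Finset.range (M + 1)) 1 := by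
    rw [← hsum]
    simp only [Gminus, LinearMap.add_apply, LinearMap.smul_apply, Finsupp.lsum_single,
      LinearMap.toSpanSingleton_apply, one_smul]
  rw [hG]
  by_cases hp : p = 0
  · subst hp
    have : ((0 : ℕ) : ℤ) - (M : ℤ) = -(M : ℤ) := by simp
    rw [this, PsiM_top_aux, ← add_smul]
    congr 1
    simp [add_comm]
  · rw [PsiM_zero_aux M _ (by omega), smul_zero, zero_add, if_neg hp]

/-- For every `N ∈ ℤ≥0`,
`G⁻(p−N−1/2)⋯G⁻(p−3/2)·G⁻(p−1/2)·𝟙 = C · Ψ⁻(−N−1/2)⋯Ψ⁻(−3/2)Ψ⁻(−1/2)·𝟙`, where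
`C = χ_p^{N+1}` if `p ≥ 1`, and `C = χ_0(χ_0+1)⋯(χ_0+N)` if `p = 0`.  (The monomial
`Ψ⁻(−N−1/2)⋯Ψ⁻(−1/2)·𝟙` is the basis vector indexed by `(∅, {0,…,N})`.) -/
theorem statement2 (p : ℕ) (χ : ℤ → ℂ) (hχtop : ∀ j : ℤ, (p : ℤ) < j → χ j = 0) (N : ℕ) :
    iterGm p χ N =
      (if p = 0 then ∏ j ∈ Finset.range (N + 1), (χ 0 + (j : ℂ)) else χ p ^ (N + 1)) •
        Finsupp.single (∅, Finset.range (N + 1)) 1 := by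
  induction N with
  | zero =>
    have h := Gminus_aux p χ 0
    simpa [iterGm, vac] using h
  | succ N ih =>
    have h := Gminus_aux p χ (N + 1)
    push_cast at h
    rw [iterGm, ih, map_smul, h, smul_smul]
    congr 1
    split_ifs
    · rw [Finset.prod_range_succ _ (N + 1)]
      push_cast
      rfl
    · rw [pow_succ _ (N + 1)]
end

section
/- Assume λ ∈ ℂ \ ℤ, χ_p ≠ 0, and, in case p = 0, additionally χ_0 ∈ ℂ \ ℤ. Let v = Ψ⁺(−n_1−1/2)···Ψ⁺(−n_r−1/2)Ψ⁻(−k_1−1/2)···Ψ⁻(−k_s−1/2)𝟙 be a basis monomial of F (integers n_1>···>n_r≥0, k_1>···>k_s≥0). Then G⁻(n_r+p+1/2)···G⁻(n_1+p+1/2)·G⁺(k_s+1/2)···G⁺(k_1+1/2)·v = C′·𝟙, where C′ is a NONZERO scalar; moreover C′ equals, up to a sign, (λ−k_1−1)···(λ−k_s−1)·C″ with C″ = χ_p^r if p ≥ 1 and C″ = (χ_0−n_1−1)···(χ_0−n_r−1) if p = 0. -/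
theorem aux_bind (l : List ℕ) (f : ℂ → ℂ) :
    List.map f (do let a ← l; pure (a : ℂ)) = l.map fun k : ℕ => f (k : ℂ) := by
  induction l with
  | nil => rfl
  | cons a l ih => simpa using ih

theorem aux_bind_foldl (l : List ℕ) (f : FockF → ℤ → FockF) (w : FockF) :
    List.foldl f w (do let a ← l; pure (a : ℤ)) = l.foldl (fun w (k : ℕ) => f w (k : ℤ)) w := by
  induction l generalizing w with
  | nil => rfl
  | cons a l ih => simpa using ih (f w a)

theorem aux_foldl_smul (f : ℕ → Module.End ℂ FockF) (l : List ℕ) (c : ℂ) (w : FockF) :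
    l.foldl (fun w n => f n w) (c • w) = c • l.foldl (fun w n => f n w) w := by
  induction l generalizing w with
  | nil => rfl
  | cons a l ih => simp only [List.foldl_cons, map_smul, ih]

theorem aux_sgn (l : List ℕ) (n : ℕ) (h : ∀ a ∈ l, a < n) : sgn (n :: l).toFinset n = 1 := by
  unfold sgn
  have : ((n :: l).toFinset.filter fun a => n < a) = ∅ := by
    ext a
    simp only [Finset.mem_filter, List.mem_toFinset, List.mem_cons, Finset.notMem_empty, iff_false,
      not_and, not_lt]
    rintro (rfl | ha)
    · exact le_rfl
    · exact (h a ha).le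
  rw [this]; simp

theorem aux_erase (l : List ℕ) (n : ℕ) (h : ∀ a ∈ l, a < n) :
    (n :: l).toFinset.erase n = l.toFinset := by
  rw [List.toFinset_cons, Finset.erase_insert]
  intro hn
  exact lt_irrefl _ (h n (List.mem_toFinset.1 hn))

theorem aux_PsiM (A B : Finset ℕ) (m : ℕ) (i : ℤ) (hi : i = m + 1) :
    PsiM i (Finsupp.single (A, B) 1) =
      if m ∈ A then sgn A m • Finsupp.single (A.erase m, B) 1 else 0 := by
  subst hi
  have h1 : ¬ ((m : ℤ) + 1 ≤ 0) := by omega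
  have h2 : ((m : ℤ) + 1 - 1).toNat = m := by omega
  rw [PsiM, if_neg h1, h2, psiMpos]
  simp

theorem aux_PsiP (A B : Finset ℕ) (m : ℕ) :
    PsiP ((m : ℤ) + 1) (Finsupp.single (A, B) 1) =
      if m ∈ B then ((-1 : ℂ) ^ A.card * sgn B m) • Finsupp.single (A, B.erase m) 1 else 0 := by
  have h1 : ¬ ((m : ℤ) + 1 ≤ 0) := by omega
  have h2 : ((m : ℤ) + 1 - 1).toNat = m := by omega
  rw [PsiP, if_neg h1, h2, psiPpos]
  simp

theorem aux_Gplus (lam : ℂ) (A : Finset ℕ) (l : List ℕ) (k : ℕ) (h : ∀ a ∈ l, a < k) :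
    Gplus lam ((k : ℤ) + 1) (Finsupp.single (A, (k :: l).toFinset) 1) =
      ((-1 : ℂ) ^ A.card * (lam - k - 1)) • Finsupp.single (A, l.toFinset) (1 : ℂ) := by
  rw [Gplus, LinearMap.smul_apply, aux_PsiP, if_pos (by simp), aux_sgn l k h, aux_erase l k h,
    smul_smul]
  congr 1
  push_cast
  ring

theorem aux_ks (lam : ℂ) (A : Finset ℕ) (ks : List ℕ) (h : ks.Pairwise (· > ·)) :
    ∃ e : ℂ, (e = 1 ∨ e = -1) ∧
      ks.foldl (fun w (k : ℕ) => Gplus lam ((k : ℤ) + 1) w) (Finsupp.single (A, ks.toFinset) 1) =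
        (e * (ks.map fun k : ℕ => lam - (k : ℂ) - 1).prod) • Finsupp.single (A, ∅) (1 : ℂ) := by
  induction ks with
  | nil => exact ⟨1, Or.inl rfl, by simp⟩
  | cons k l ih =>
    rw [List.pairwise_cons] at h
    obtain ⟨e, he, hf⟩ := ih h.2
    refine ⟨(-1) ^ A.card * e, ?_, ?_⟩
    · rcases neg_one_pow_eq_or ℂ A.card with h1 | h1 <;> rcases he with h2 | h2 <;> simp [h1, h2]
    · rw [List.foldl_cons, aux_Gplus lam A l k h.1,
        aux_foldl_smul (fun k : ℕ => Gplus lam ((k : ℤ) + 1)), hf, smul_smul, List.map_cons,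
        List.prod_cons]
      congr 1
      ring

theorem aux_Gminus (p : ℕ) (χ : ℤ → ℂ) (l : List ℕ) (n : ℕ) (h : ∀ a ∈ l, a < n) :
    Gminus p χ ((n : ℤ) + (p : ℤ) + 1) (Finsupp.single ((n :: l).toFinset, ∅) 1) =
      (if p = 0 then χ 0 - n - 1 else χ p) • Finsupp.single (l.toFinset, ∅) (1 : ℂ) := by
  have hmem : ∀ m : ℕ, n < m → m ∉ (n :: l).toFinset := by
    intro m hm hm'
    rw [List.mem_toFinset, List.mem_cons] at hm'
    rcases hm' with rfl | hm'
    · exact lt_irrefl _ hm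
    · exact lt_asymm hm (h m hm')
  have hmain : PsiM ((n : ℤ) + 1) (Finsupp.single ((n :: l).toFinset, ∅) 1) =
      Finsupp.single (l.toFinset, ∅) (1 : ℂ) := by
    rw [aux_PsiM _ _ n _ rfl, if_pos (by simp), aux_sgn l n h, aux_erase l n h, one_smul]
  have hsum : ∑ k ∈ GminusIdx p ((n : ℤ) + (p : ℤ) + 1) ((n :: l).toFinset, ∅),
      χ (-k) • PsiM (k + ((n : ℤ) + (p : ℤ) + 1)) (Finsupp.single ((n :: l).toFinset, ∅) 1) =
      χ p • Finsupp.single (l.toFinset, ∅) (1 : ℂ) := by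
    rw [Finset.sum_eq_single (-(p : ℤ))]
    · rw [show -(p : ℤ) + ((n : ℤ) + (p : ℤ) + 1) = (n : ℤ) + 1 by ring, hmain, neg_neg]
    · intro k hk hne
      have hk' : -(p : ℤ) ≤ k := (Finset.mem_filter.1 hk).2
      rw [aux_PsiM _ _ (k + n + p).toNat _ (by omega), if_neg (hmem _ (by omega)), smul_zero]
    · intro hk
      exfalso
      apply hk
      rw [GminusIdx, Finset.mem_filter, Finset.mem_union, Finset.mem_image]
      exact ⟨Or.inr ⟨n, by simp, by ring⟩, le_rfl⟩
  have hG : Gminus p χ ((n : ℤ) + (p : ℤ) + 1) (Finsupp.single ((n :: l).toFinset, ∅) 1) =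
      (-(((n : ℤ) + (p : ℤ) + 1 : ℤ) : ℂ)) •
        PsiM ((n : ℤ) + (p : ℤ) + 1) (Finsupp.single ((n :: l).toFinset, ∅) 1) +
      ∑ k ∈ GminusIdx p ((n : ℤ) + (p : ℤ) + 1) ((n :: l).toFinset, ∅),
      χ (-k) • PsiM (k + ((n : ℤ) + (p : ℤ) + 1)) (Finsupp.single ((n :: l).toFinset, ∅) 1) := by
    rw [Gminus, LinearMap.add_apply, LinearMap.smul_apply, Finsupp.lsum_single,
      LinearMap.toSpanSingleton_apply, one_smul]
  rw [hG, hsum]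
  by_cases hp : p = 0
  · subst hp
    simp only [Nat.cast_zero, add_zero, if_true]
    rw [hmain, ← add_smul]
    congr 1
    push_cast
    ring
  · rw [aux_PsiM _ _ (n + p) _ (by push_cast; ring), if_neg (hmem _ (by omega)), if_neg hp,
      smul_zero, zero_add]

theorem aux_ns (p : ℕ) (χ : ℤ → ℂ) (ns : List ℕ) (h : ns.Pairwise (· > ·)) :
    ns.foldl (fun w (n : ℕ) => Gminus p χ ((n : ℤ) + (p : ℤ) + 1) w)
        (Finsupp.single (ns.toFinset, ∅) 1) =
      (if p = 0 then (ns.map fun n : ℕ => χ 0 - (n : ℂ) - 1).prod else χ p ^ ns.length) • vac := by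
  induction ns with
  | nil => simp [vac]
  | cons n l ih =>
    rw [List.pairwise_cons] at h
    rw [List.foldl_cons, aux_Gminus p χ l n h.1,
      aux_foldl_smul (fun n : ℕ => Gminus p χ ((n : ℤ) + (p : ℤ) + 1)), ih h.2, smul_smul]
    congr 1
    split_ifs
    · rw [List.map_cons, List.prod_cons]
    · rw [List.length_cons, pow_succ']

/-- Assume `λ ∈ ℂ \ ℤ`, `χ_p ≠ 0` and (if `p = 0`) `χ_0 ∈ ℂ \ ℤ`.  Let
`v = Ψ⁺(−n₁−1/2)⋯Ψ⁺(−n_r−1/2)Ψ⁻(−k₁−1/2)⋯Ψ⁻(−k_s−1/2)𝟙` be a basis monomial of `F`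
(with `n₁ > ⋯ > n_r ≥ 0`, `k₁ > ⋯ > k_s ≥ 0`, encoded as strictly decreasing lists `ns`, `ks`).
Then `G⁻(n_r+p+1/2)⋯G⁻(n₁+p+1/2)·G⁺(k_s+1/2)⋯G⁺(k₁+1/2)·v = C′·𝟙` for a NONZERO scalar
`C′`, which moreover equals, up to a sign, `(λ−k₁−1)⋯(λ−k_s−1)·C″` with `C″ = χ_p^r` if
`p ≥ 1` and `C″ = (χ_0−n₁−1)⋯(χ_0−n_r−1)` if `p = 0`. -/
theorem statement3 (p : ℕ) (χ : ℤ → ℂ) (hχtop : ∀ j : ℤ, (p : ℤ) < j → χ j = 0)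
    (hp : χ p ≠ 0) (h0 : p = 0 → ∀ n : ℤ, χ 0 ≠ (n : ℂ))
    (lam : ℂ) (hlam : ∀ n : ℤ, lam ≠ (n : ℂ))
    (ns ks : List ℕ) (hns : ns.Chain' (· > ·)) (hks : ks.Chain' (· > ·)) :
    ∃ C' : ℂ, C' ≠ 0 ∧
      (C' = (ks.map fun k => lam - (k : ℂ) - 1).prod *
              (if p = 0 then (ns.map fun n => χ 0 - (n : ℂ) - 1).prod else χ p ^ ns.length) ∨
       C' = -((ks.map fun k => lam - (k : ℂ) - 1).prod *
              (if p = 0 then (ns.map fun n => χ 0 - (n : ℂ) - 1).prod else χ p ^ ns.length))) ∧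
      ns.foldl (fun w n => Gminus p χ ((n : ℤ) + (p : ℤ) + 1) w)
          (ks.foldl (fun w k => Gplus lam ((k : ℤ) + 1) w)
            (Finsupp.single (ns.toFinset, ks.toFinset) 1)) = C' • vac := by
  simp only [aux_bind, aux_bind_foldl]
  have hns' : ns.Pairwise (· > ·) := List.isChain_iff_pairwise.1 hns
  have hks' : ks.Pairwise (· > ·) := List.isChain_iff_pairwise.1 hks
  obtain ⟨e, he, hf⟩ := aux_ks lam ns.toFinset ks hks'
  have hne : (ks.map fun k : ℕ => lam - (k : ℂ) - 1).prod *
      (if p = 0 then (ns.map fun n : ℕ => χ 0 - (n : ℂ) - 1).prod else χ p ^ ns.length) ≠ 0 := by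
    apply mul_ne_zero
    · rw [Ne, List.prod_eq_zero_iff, List.mem_map]
      rintro ⟨k, -, hk⟩
      apply hlam (k + 1)
      push_cast
      linear_combination hk
    · split_ifs with hp0
      · rw [Ne, List.prod_eq_zero_iff, List.mem_map]
        rintro ⟨k, -, hk⟩
        apply h0 hp0 (k + 1)
        push_cast
        linear_combination hk
      · exact pow_ne_zero _ hp
  refine ⟨e * ((ks.map fun k : ℕ => lam - (k : ℂ) - 1).prod *
      (if p = 0 then (ns.map fun n : ℕ => χ 0 - (n : ℂ) - 1).prod else χ p ^ ns.length)), ?_, ?_, ?_⟩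
  · apply mul_ne_zero _ hne
    rcases he with rfl | rfl <;> simp
  · rcases he with rfl | rfl
    · left; rw [one_mul]
    · right; rw [neg_one_mul]
  · rw [hf, aux_foldl_smul (fun n : ℕ => Gminus p χ ((n : ℤ) + (p : ℤ) + 1)), aux_ns p χ ns hns',
      smul_smul, mul_assoc]
end

section
/- The fermionic Fock space is irreducible over the Clifford algebra: the only ℂ-subspaces of Λ(V) invariant under all the operators a_i and a_i†, i ∈ I, are {0} and Λ(V). Equivalently, every nonzero vector of Λ(V) is cyclic for the associative algebra of endomorphisms generated by {a_i, a_i† : i ∈ I}. -/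
open CliffordAlgebra in
theorem fock_kill {I : Type} (w : ExteriorAlgebra ℂ (I →₀ ℂ)) :
    ∃ S : Finset I, ∀ j ∉ S, contractLeft (Q := (0 : QuadraticForm ℂ (I →₀ ℂ)))
      (Finsupp.lapply j) w = 0 := by
  classical
  induction w using CliffordAlgebra.left_induction with
  | algebraMap r => exact ⟨∅, fun j _ => contractLeft_algebraMap _ _ _⟩
  | add x y hx hy =>
    obtain ⟨S, hS⟩ := hx
    obtain ⟨T, hT⟩ := hy
    refine ⟨S ∪ T, fun j hj => ?_⟩
    rw [Finset.mem_union, not_or] at hj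
    rw [map_add, hS j hj.1, hT j hj.2, add_zero]
  | ι_mul x m hx =>
    obtain ⟨S, hS⟩ := hx
    refine ⟨S ∪ m.support, fun j hj => ?_⟩
    rw [Finset.mem_union, not_or, Finsupp.notMem_support_iff] at hj
    rw [contractLeft_ι_mul, hS j hj.1, Finsupp.lapply_apply, hj.2, zero_smul, mul_zero, sub_zero]

theorem fock_decomp {I : Type} (w : ExteriorAlgebra ℂ (I →₀ ℂ)) :
    ∃ (c : ℂ) (u : I →₀ ExteriorAlgebra ℂ (I →₀ ℂ)),
      w = algebraMap ℂ _ c +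
        u.sum (fun i v => ExteriorAlgebra.ι ℂ (Finsupp.single i (1 : ℂ)) * v) := by
  classical
  induction w using CliffordAlgebra.left_induction with
  | algebraMap r => exact ⟨r, 0, by rw [Finsupp.sum_zero_index, add_zero]⟩
  | add x y hx hy =>
    obtain ⟨c, u, rfl⟩ := hx
    obtain ⟨d, v, rfl⟩ := hy
    refine ⟨c + d, u + v, ?_⟩
    rw [Finsupp.sum_add_index' (by simp) (by intros; rw [mul_add]), map_add]
    exact add_add_add_comm _ _ _ _
  | ι_mul x m _ =>
    refine ⟨0, m.mapRange (fun c => c • (x : ExteriorAlgebra ℂ (I →₀ ℂ))) (zero_smul _ _), ?_⟩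
    rw [Finsupp.sum_mapRange_index (by simp), map_zero, zero_add]
    change ExteriorAlgebra.ι ℂ m * x = _
    conv_lhs => rw [← Finsupp.sum_single m]
    rw [Finsupp.sum, map_sum, Finset.sum_mul, Finsupp.sum]
    refine Finset.sum_congr rfl fun i _ => ?_
    rw [mul_smul_comm, ← smul_mul_assoc, ← map_smul, Finsupp.smul_single, smul_eq_mul, mul_one]

/-- Vectors killed by all annihilation operators are scalars. -/
theorem fock_vacuum {I : Type} (w : ExteriorAlgebra ℂ (I →₀ ℂ))
    (hw : ∀ j, CliffordAlgebra.contractLeft (Q := (0 : QuadraticForm ℂ (I →₀ ℂ)))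
      (Finsupp.lapply j) w = 0) (c : ℂ) (S : Finset I) :
    ∀ (u : I → ExteriorAlgebra ℂ (I →₀ ℂ)),
      w = algebraMap ℂ _ c + ∑ i ∈ S, ExteriorAlgebra.ι ℂ (Finsupp.single i (1 : ℂ)) * u i →
      w = algebraMap ℂ _ c := by
  classical
  induction S using Finset.induction_on with
  | empty => intro u h; simpa using h
  | insert i S hi ih =>
    intro u h
    let a : ExteriorAlgebra ℂ (I →₀ ℂ) →ₗ[ℂ] ExteriorAlgebra ℂ (I →₀ ℂ) :=
      CliffordAlgebra.contractLeft (Q := (0 : QuadraticForm ℂ (I →₀ ℂ))) (Finsupp.lapply i)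
    let e : I → ExteriorAlgebra ℂ (I →₀ ℂ) :=
      fun i => ExteriorAlgebra.ι ℂ (Finsupp.single i (1 : ℂ))
    have ha : ∀ (j : I) (v), a (e j * v) = (Finsupp.single j (1:ℂ)) i • v - e j * a v :=
      fun j v => CliffordAlgebra.contractLeft_ι_mul _ _ _
    have hc : a (algebraMap ℂ _ c) = 0 := CliffordAlgebra.contractLeft_algebraMap _ _ _
    have hwi : a w = 0 := hw i
    have he : ∀ j, e i * e j = - (e j * e i) := fun j =>
      eq_neg_of_add_eq_zero_left (ExteriorAlgebra.ι_add_mul_swap _ _)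
    have hee : e i * e i = 0 := ExteriorAlgebra.ι_sq_zero _
    refine ih (fun j => u j - e i * a (u j)) ?_
    have h1 : w = w - e i * a w := by rw [hwi, mul_zero, sub_zero]
    rw [h1, h, map_add, hc, zero_add, map_sum, Finset.mul_sum, add_sub_assoc,
      ← Finset.sum_sub_distrib, Finset.sum_insert hi]
    congr 1
    have h2 : e i * u i - e i * a (e i * u i) = 0 := by
      rw [ha, Finsupp.single_eq_same, one_smul, mul_sub, ← mul_assoc, hee, zero_mul, sub_zero,
        sub_self]
    refine (congrArg₂ (· + ·) h2 (Finset.sum_congr rfl fun j hj => ?_)).trans (zero_add _)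
    have hji : i ≠ j := fun h => hi (h ▸ hj)
    change e j * u j - e i * a (e j * u j) = e j * (u j - e i * a (u j))
    rw [ha, Finsupp.single_eq_of_ne hji, zero_smul, zero_sub, mul_neg, ← mul_assoc, he j,
      neg_mul, neg_neg, mul_sub, mul_assoc]

theorem fock_one_mem {I : Type} (U : Submodule ℂ (ExteriorAlgebra ℂ (I →₀ ℂ)))
    (hU : ∀ i : I, ∀ v ∈ U, CliffordAlgebra.contractLeft
      (Q := (0 : QuadraticForm ℂ (I →₀ ℂ))) (Finsupp.lapply i) v ∈ U) (S : Finset I) :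
    ∀ w ∈ U, w ≠ 0 → (∀ j ∉ S, CliffordAlgebra.contractLeft
      (Q := (0 : QuadraticForm ℂ (I →₀ ℂ))) (Finsupp.lapply j) w = 0) →
      (1 : ExteriorAlgebra ℂ (I →₀ ℂ)) ∈ U := by
  classical
  induction S using Finset.induction_on with
  | empty =>
    intro w hwU hw0 hw
    obtain ⟨c, u, h⟩ := fock_decomp w
    have h := fock_vacuum w (fun j => hw j (Finset.notMem_empty j)) c u.support u h
    have hc : c ≠ 0 := by rintro rfl; exact hw0 (by rw [h, map_zero])
    have := U.smul_mem c⁻¹ hwU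
    rwa [h, Algebra.algebraMap_eq_smul_one, smul_smul, inv_mul_cancel₀ hc, one_smul] at this
  | insert i S hi ih =>
    intro w hwU hw0 hw
    by_cases h : CliffordAlgebra.contractLeft
      (Q := (0 : QuadraticForm ℂ (I →₀ ℂ))) (Finsupp.lapply i) w = 0
    · refine ih w hwU hw0 fun j hj => ?_
      by_cases hji : j = i
      · rw [hji, h]
      · exact hw j (by simp [hji, hj])
    · refine ih _ (hU i w hwU) h fun j hj => ?_
      by_cases hji : j = i
      · rw [hji, CliffordAlgebra.contractLeft_contractLeft]
      · rw [CliffordAlgebra.contractLeft_comm, hw j (by simp [hji, hj]), map_zero, neg_zero]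

theorem fock_top {I : Type} (U : Submodule ℂ (ExteriorAlgebra ℂ (I →₀ ℂ)))
    (hU : ∀ i : I, ∀ v ∈ U, ExteriorAlgebra.ι ℂ (Finsupp.single i (1 : ℂ)) * v ∈ U)
    (h1 : (1 : ExteriorAlgebra ℂ (I →₀ ℂ)) ∈ U) : U = ⊤ := by
  rw [eq_top_iff]
  rintro w -
  induction w using CliffordAlgebra.left_induction with
  | algebraMap r =>
    have := U.smul_mem r h1
    rwa [← Algebra.algebraMap_eq_smul_one] at this
  | add x y hx hy => exact U.add_mem hx hy
  | ι_mul x m hx =>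
    change ExteriorAlgebra.ι ℂ m * x ∈ U
    rw [← Finsupp.sum_single m, Finsupp.sum, map_sum, Finset.sum_mul]
    refine U.sum_mem fun i _ => ?_
    have := U.smul_mem (m i) (hU i x hx)
    rwa [← smul_mul_assoc, ← map_smul, Finsupp.smul_single, smul_eq_mul, mul_one] at this

/-- Let `I` be an index set, `V = ⊕_{i∈I} ℂxᵢ` (realized as `I →₀ ℂ` with
basis `xᵢ = single i 1`), and `Λ(V)` its exterior algebra.  For `i ∈ I` let
`aᵢ† = left exterior multiplication by xᵢ` and `aᵢ = contraction along the dual basis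
functional δᵢ` (the odd contraction with `aᵢ(1) = 0`, `aᵢ(xⱼ) = δᵢⱼ`, satisfying the odd
Leibniz rule); these satisfy the canonical anticommutation relations.  Then the fermionic
Fock space `Λ(V)` is irreducible over the Clifford algebra: the only `ℂ`-subspaces of `Λ(V)`
invariant under all `aᵢ`, `aᵢ†` are `{0}` and `Λ(V)`; equivalently, every nonzero vector is
cyclic for the algebra of endomorphisms generated by the `aᵢ`, `aᵢ†`. -/
theorem statement8 (I : Type) :
    (∀ U : Submodule ℂ (ExteriorAlgebra ℂ (I →₀ ℂ)),
      (∀ i : I, ∀ v ∈ U,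
        ExteriorAlgebra.ι ℂ (Finsupp.single i (1 : ℂ)) * v ∈ U ∧
        CliffordAlgebra.contractLeft (Q := (0 : QuadraticForm ℂ (I →₀ ℂ)))
          (Finsupp.lapply i) v ∈ U) →
      U = ⊥ ∨ U = ⊤) ∧
    (∀ w : ExteriorAlgebra ℂ (I →₀ ℂ), w ≠ 0 →
      ∀ U : Submodule ℂ (ExteriorAlgebra ℂ (I →₀ ℂ)), w ∈ U →
        (∀ i : I, ∀ v ∈ U,
          ExteriorAlgebra.ι ℂ (Finsupp.single i (1 : ℂ)) * v ∈ U ∧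
          CliffordAlgebra.contractLeft (Q := (0 : QuadraticForm ℂ (I →₀ ℂ)))
            (Finsupp.lapply i) v ∈ U) →
        U = ⊤) := by
  have key : ∀ w : ExteriorAlgebra ℂ (I →₀ ℂ), w ≠ 0 →
      ∀ U : Submodule ℂ (ExteriorAlgebra ℂ (I →₀ ℂ)), w ∈ U →
        (∀ i : I, ∀ v ∈ U,
          ExteriorAlgebra.ι ℂ (Finsupp.single i (1 : ℂ)) * v ∈ U ∧
          CliffordAlgebra.contractLeft (Q := (0 : QuadraticForm ℂ (I →₀ ℂ)))
            (Finsupp.lapply i) v ∈ U) →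
        U = ⊤ := by
    intro w hw U hwU hU
    obtain ⟨S, hS⟩ := fock_kill w
    exact fock_top U (fun i v hv => (hU i v hv).1)
      (fock_one_mem U (fun i v hv => (hU i v hv).2) S w hwU hw hS)
  refine ⟨fun U hU => ?_, key⟩
  by_cases h : U = ⊥
  · exact Or.inl h
  · obtain ⟨w, hwU, hw⟩ := U.ne_bot_iff.mp h
    exact Or.inr (key w hw U hwU hU)
end
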